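/- The map M = T_P ∘ K⁻¹ ∘ T_{P′} is a homothety or a translation of ℝ², and M maps the circumconic C̃_O onto the inconic I (in particular M(O) = Q). -/

import Mathlib

noncomputable section

/-- The real affine plane. -/
abbrev Pt : Type := ℝ × ℝ

/-- `u` and `v` are parallel vectors (the zero vector is parallel to everything). -/
def Par (u v : Pt) : Prop := ∃ t : ℝ, u = t • v ∨ v = t • u

/-- The centroid of the triangle `ABC`. -/
def cent (A B C : Pt) : Pt := (3⁻¹ : ℝ) • (A + B + C)

/-- The homothety with center `Z` and ratio `r`. -/
def homoth (Z : Pt) (r : ℝ) (X : Pt) : Pt := Z + r • (X - Z)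

/-- The value at `p` of the quadratic polynomial with coefficient vector `c`. -/
def qval (c : Fin 6 → ℝ) (p : Pt) : ℝ :=
  c 0 * p.1 ^ 2 + c 1 * p.1 * p.2 + c 2 * p.2 ^ 2 + c 3 * p.1 + c 4 * p.2 + c 5

/-- `S` is a conic: the zero locus of a real polynomial of total degree 2. -/
def IsConic (S : Set Pt) : Prop :=
  ∃ c : Fin 6 → ℝ, ¬(c 0 = 0 ∧ c 1 = 0 ∧ c 2 = 0) ∧ S = {p | qval c p = 0}

/-- `Z` is a center of symmetry of `S`. -/
def IsCenterOf (Z : Pt) (S : Set Pt) : Prop :=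
  ∀ p ∈ S, (2 : ℝ) • Z - p ∈ S

/-- The gradient at `p` of the quadratic polynomial with coefficients `c`. -/
def qgrad (c : Fin 6 → ℝ) (p : Pt) : Pt :=
  (2 * c 0 * p.1 + c 1 * p.2 + c 3, c 1 * p.1 + 2 * c 2 * p.2 + c 4)

/-- The line through `X` and `Y`. -/
def lineThru (X Y : Pt) : Set Pt := {p | ∃ t : ℝ, p = X + t • (Y - X)}

/-- `L` is the tangent line at the nonsingular point `p` of the conic with coefficients `c`. -/
def IsTangentLineAt (c : Fin 6 → ℝ) (L : Set Pt) (p : Pt) : Prop :=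
  qval c p = 0 ∧ qgrad c p ≠ 0 ∧
  L = {q | (qgrad c p).1 * (q.1 - p.1) + (qgrad c p).2 * (q.2 - p.2) = 0}

/-- The determinant of the pair of vectors `u`, `v`. -/
def cross (u v : Pt) : ℝ := u.1 * v.2 - u.2 * v.1

lemma eq_of_cross_sub_eq_zero {u v X Y : Pt} (huv : cross u v ≠ 0)
    (hu : cross u (X - Y) = 0) (hv : cross v (X - Y) = 0) : X = Y := by
  simp only [cross, Prod.fst_sub, Prod.snd_sub] at *
  ext
  · refine sub_eq_zero.1 ((mul_eq_zero.1 (?_ : _ * (X.1 - Y.1) = 0)).resolve_left huv)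
    linear_combination v.1 * hu - u.1 * hv
  · refine sub_eq_zero.1 ((mul_eq_zero.1 (?_ : _ * (X.2 - Y.2) = 0)).resolve_left huv)
    linear_combination v.2 * hu - u.2 * hv

lemma cross_eq_zero_of_collinear {X Y Z : Pt} (h : Collinear ℝ {X, Y, Z}) :
    cross (Y - X) (Z - X) = 0 := by
  obtain ⟨w, hw⟩ := (collinear_iff_of_mem (p₀ := X) (by simp)).1 h
  obtain ⟨s, rfl⟩ := hw Y (by simp)
  obtain ⟨t, rfl⟩ := hw Z (by simp)
  simp [cross]
  ring

lemma collinear_of_cross_eq_zero {X Y Z : Pt} (h : cross (Y - X) (Z - X) = 0) :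
    Collinear ℝ {X, Y, Z} := by
  by_cases hXY : Y = X
  · subst hXY
    simpa using collinear_pair ℝ Y Z
  rw [collinear_iff_of_mem (p₀ := X) (by simp)]
  refine ⟨Y - X, ?_⟩
  simp only [cross, Prod.fst_sub, Prod.snd_sub] at h
  have hZ : ∃ t : ℝ, Z = t • (Y - X) + X := by
    by_cases h1 : Y.1 - X.1 = 0
    · have h2 : Y.2 - X.2 ≠ 0 := fun h2 =>
        hXY (Prod.ext (sub_eq_zero.1 h1) (sub_eq_zero.1 h2))
      refine ⟨(Z.2 - X.2) / (Y.2 - X.2), ?_⟩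
      ext
      · simp only [Prod.fst_add, Prod.smul_fst, Prod.fst_sub, smul_eq_mul]
        field_simp
        linear_combination -h
      · simp only [Prod.snd_add, Prod.smul_snd, Prod.snd_sub, smul_eq_mul]
        field_simp
        ring
    · refine ⟨(Z.1 - X.1) / (Y.1 - X.1), ?_⟩
      ext
      · simp only [Prod.fst_add, Prod.smul_fst, Prod.fst_sub, smul_eq_mul]
        field_simp
        ring
      · simp only [Prod.snd_add, Prod.smul_snd, Prod.snd_sub, smul_eq_mul]
        field_simp
        linear_combination h
  rintro p (rfl | rfl | rfl)
  · exact ⟨0, by simp⟩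
  · exact ⟨1, by simp⟩
  · exact hZ

/-- The foot on line `BC` of the cevian from `A` through `x • A + y • B + z • C`. -/
lemma cevian_trace {A B C P D : Pt} {x y z : ℝ} (hABC : cross (B - A) (C - A) ≠ 0)
    (hsum : x + y + z = 1) (hyz : y + z ≠ 0) (hP : P = x • A + y • B + z • C)
    (hAPD : Collinear ℝ {A, P, D}) (hBCD : Collinear ℝ {B, C, D}) :
    D = (y / (y + z)) • B + (z / (y + z)) • C := by
  have h1 := cross_eq_zero_of_collinear hAPD
  have h2 := cross_eq_zero_of_collinear hBCD
  obtain rfl : x = 1 - y - z := by linear_combination hsum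
  subst hP
  refine eq_of_cross_sub_eq_zero (u := C - B)
    (v := ((1 - y - z) • A + y • B + z • C) - A) ?_ ?_ ?_
  · have : cross (C - B) (((1 - y - z) • A + y • B + z • C) - A)
        = -((y + z) * cross (B - A) (C - A)) := by
      simp [cross]
      ring
    rw [this]
    exact neg_ne_zero.2 (mul_ne_zero hyz hABC)
  · simp [cross] at h2 ⊢
    field_simp
    linear_combination (y + z) * h2
  · simp [cross] at h1 ⊢
    field_simp
    linear_combination (y + z) * h1

lemma exists_barycentric {A B C : Pt} (hABC : cross (B - A) (C - A) ≠ 0) (X : Pt) :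
    ∃ v w : ℝ, X = (1 - v - w) • A + v • B + w • C := by
  refine ⟨cross (X - A) (C - A) / cross (B - A) (C - A),
    cross (B - A) (X - A) / cross (B - A) (C - A), ?_⟩
  ext
  · simp only [Prod.fst_add, Prod.smul_fst, smul_eq_mul]
    field_simp
    simp [cross]
    ring
  · simp only [Prod.snd_add, Prod.smul_snd, smul_eq_mul]
    field_simp
    simp [cross]
    ring

lemma map_barycentric (T : Pt ≃ᵃ[ℝ] Pt) (A B C : Pt) (v w : ℝ) :
    T ((1 - v - w) • A + v • B + w • C) = (1 - v - w) • T A + v • T B + w • T C := by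
  have h : (1 - v - w) • A + v • B + w • C = (v • (B - A) + w • (C - A)) +ᵥ A := by
    rw [vadd_eq_add]
    module
  have hB : T.linear (B - A) = T B - T A := by
    simpa using T.toAffineMap.linearMap_vsub B A
  have hC : T.linear (C - A) = T C - T A := by
    simpa using T.toAffineMap.linearMap_vsub C A
  rw [h, AffineEquiv.map_vadd, map_add, map_smul, map_smul, hB, hC, vadd_eq_add]
  module

/-- The symmetric bi-affine form polarizing `qval c`. -/
def qpolar (c : Fin 6 → ℝ) (p q : Pt) : ℝ :=
  c 0 * p.1 * q.1 + c 1 * (p.1 * q.2 + p.2 * q.1) / 2 + c 2 * p.2 * q.2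
    + c 3 * (p.1 + q.1) / 2 + c 4 * (p.2 + q.2) / 2 + c 5

lemma qpolar_eq_zero_of_tangent {c : Fin 6 → ℝ} {L : Set Pt} {p q : Pt}
    (h : IsTangentLineAt c L p) (hq : q ∈ L) : qpolar c p q = 0 := by
  obtain ⟨h0, -, rfl⟩ := h
  simp only [Set.mem_ofPred_eq, qgrad, qval] at hq h0
  simp only [qpolar]
  linear_combination h0 + hq / 2

lemma qpolar_combination (c : Fin 6 → ℝ) (X Y Z : Pt) {s t : ℝ} (hst : s + t = 1) :
    qpolar c (s • X + t • Y) Z = s * qpolar c X Z + t * qpolar c Y Z := by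
  obtain rfl : s = 1 - t := by linear_combination hst
  simp [qpolar]
  ring

lemma qpolar_comm (c : Fin 6 → ℝ) (X Y : Pt) : qpolar c X Y = qpolar c Y X := by
  simp only [qpolar]
  ring

lemma qval_barycentric (c : Fin 6 → ℝ) (A B C : Pt) {u v w : ℝ} (h : u + v + w = 1) :
    qval c (u • A + v • B + w • C) =
      u ^ 2 * qpolar c A A + v ^ 2 * qpolar c B B + w ^ 2 * qpolar c C C
        + 2 * u * v * qpolar c A B + 2 * v * w * qpolar c B C + 2 * w * u * qpolar c C A := by
  obtain rfl : u = 1 - v - w := by linear_combination h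
  simp [qpolar, qval]
  ring

lemma left_mem_lineThru (X Y : Pt) : X ∈ lineThru X Y := ⟨0, by simp⟩

lemma right_mem_lineThru (X Y : Pt) : Y ∈ lineThru X Y := ⟨1, by simp⟩

/-- Relations imposed on a quadratic polynomial by tangency to line `BC` at a point of it. -/
lemma qpolar_of_tangent {c : Fin 6 → ℝ} {B C D : Pt} {y z : ℝ} (hyz : y + z ≠ 0)
    (hD : D = (y / (y + z)) • B + (z / (y + z)) • C)
    (h : IsTangentLineAt c (lineThru B C) D) :
    y * qpolar c B B + z * qpolar c B C = 0 ∧ y * qpolar c B C + z * qpolar c C C = 0 := by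
  have hB := qpolar_eq_zero_of_tangent h (left_mem_lineThru B C)
  have hC := qpolar_eq_zero_of_tangent h (right_mem_lineThru B C)
  have h1 : y / (y + z) + z / (y + z) = 1 := by field_simp
  rw [hD, qpolar_combination _ _ _ _ h1] at hB hC
  rw [qpolar_comm c C B] at hB
  field_simp at hB hC
  exact ⟨by linear_combination hB, by linear_combination hC⟩

/-- A quadratic polynomial tangent to the sides at the traces of `(x : y : z)` vanishes at
`(x p² : y q² : z r²)` whenever `p + q + r = 0`. -/
lemma qval_inconic_eq_zero {c : Fin 6 → ℝ} {A B C D E F : Pt} {x y z : ℝ}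
    (hy : y ≠ 0) (hz : z ≠ 0)
    (hyz : y + z ≠ 0) (hzx : z + x ≠ 0) (hxy : x + y ≠ 0)
    (hD : D = (y / (y + z)) • B + (z / (y + z)) • C)
    (hE : E = (z / (z + x)) • C + (x / (z + x)) • A)
    (hF : F = (x / (x + y)) • A + (y / (x + y)) • B)
    (hcD : IsTangentLineAt c (lineThru B C) D) (hcE : IsTangentLineAt c (lineThru C A) E)
    (hcF : IsTangentLineAt c (lineThru A B) F) {p q r k : ℝ} (hpqr : p + q + r = 0)
    (hsum : k * (x * p ^ 2) + k * (y * q ^ 2) + k * (z * r ^ 2) = 1) :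
    qval c ((k * (x * p ^ 2)) • A + (k * (y * q ^ 2)) • B + (k * (z * r ^ 2)) • C) = 0 := by
  obtain ⟨hBB, hBC⟩ := qpolar_of_tangent hyz hD hcD
  obtain ⟨hCC, hCA⟩ := qpolar_of_tangent hzx hE hcE
  obtain ⟨hAA, hAB⟩ := qpolar_of_tangent hxy hF hcF
  rw [qval_barycentric c A B C hsum]
  obtain rfl : r = -p - q := by linear_combination hpqr
  have eAB : qpolar c A B = -(x * qpolar c A A) / y := by
    rw [eq_div_iff hy]; linear_combination hAA
  have eCA : qpolar c C A = -(x * qpolar c A A) / z := by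
    rw [eq_div_iff hz]; linear_combination hCA
  have eBB : qpolar c B B = x ^ 2 * qpolar c A A / y ^ 2 := by
    rw [eq_div_iff (pow_ne_zero 2 hy)]; linear_combination y * hAB - x * hAA
  have eCC : qpolar c C C = x ^ 2 * qpolar c A A / z ^ 2 := by
    rw [eq_div_iff (pow_ne_zero 2 hz)]; linear_combination z * hCC - x * hCA
  have eBC : qpolar c B C = -(x ^ 2 * qpolar c A A) / (y * z) := by
    rw [eq_div_iff (mul_ne_zero hy hz)]
    rw [eBB] at hBB
    field_simp at hBB
    linear_combination hBB
  rw [eBB, eCC, eAB, eCA, eBC]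
  field_simp
  ring

lemma cross_eq_zero_of_par {u v : Pt} (h : Par u v) : cross v u = 0 := by
  obtain ⟨t, rfl | rfl⟩ := h <;> simp [cross] <;> ring

lemma isConic_preimage_scale {I : Set Pt} (hI : IsConic I) {r : ℝ} (hr : r ≠ 0) (V : Pt) :
    IsConic ((fun X : Pt => r • X + V) ⁻¹' I) := by
  obtain ⟨c, hc, rfl⟩ := hI
  refine ⟨![r ^ 2 * c 0, r ^ 2 * c 1, r ^ 2 * c 2,
    r * (2 * c 0 * V.1 + c 1 * V.2 + c 3), r * (c 1 * V.1 + 2 * c 2 * V.2 + c 4),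
    qval c V], ?_, ?_⟩
  · simpa [hr] using hc
  · ext X
    have : ∀ a b : ℝ, a = b → (a = 0 ↔ b = 0) := fun a b h => by rw [h]
    simp only [Set.mem_preimage, Set.mem_ofPred_eq]
    apply this
    simp [qval]
    ring

theorem M_homothety_or_translation_circumconic_to_inconic
    (A B C P P' Q Q' D E F D₃ E₃ F₃ : Pt) (x y z : ℝ)
    (hABC : AffineIndependent ℝ ![A, B, C])
    (hsum : x + y + z = 1)
    (hPco : P = x • A + y • B + z • C)
    (hx0 : x ≠ 0) (hy0 : y ≠ 0) (hz0 : z ≠ 0)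
    (hx1 : x ≠ 1) (hy1 : y ≠ 1) (hz1 : z ≠ 1)
    (hst : x * y + y * z + z * x ≠ 0)
    (hP' : P' = (y * z / (x * y + y * z + z * x)) • A
        + (x * z / (x * y + y * z + z * x)) • B
        + (x * y / (x * y + y * z + z * x)) • C)
    (hQ : Q = homoth (cent A B C) (-(1 / 2)) P')
    (hQ' : Q' = homoth (cent A B C) (-(1 / 2)) P)
    (hD : Collinear ℝ {A, P, D} ∧ Collinear ℝ {B, C, D})
    (hE : Collinear ℝ {B, P, E} ∧ Collinear ℝ {A, C, E})
    (hF : Collinear ℝ {C, P, F} ∧ Collinear ℝ {A, B, F})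
    (hD₃ : Collinear ℝ {A, P', D₃} ∧ Collinear ℝ {B, C, D₃})
    (hE₃ : Collinear ℝ {B, P', E₃} ∧ Collinear ℝ {A, C, E₃})
    (hF₃ : Collinear ℝ {C, P', F₃} ∧ Collinear ℝ {A, B, F₃})
    (TP : Pt ≃ᵃ[ℝ] Pt) (hTP : TP A = D ∧ TP B = E ∧ TP C = F)
    (TP' : Pt ≃ᵃ[ℝ] Pt) (hTP' : TP' A = D₃ ∧ TP' B = E₃ ∧ TP' C = F₃)
    (O H : Pt)
    (hO : Par (midpoint ℝ B C - O) (D - Q) ∧ Par (midpoint ℝ C A - O) (E - Q) ∧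
          Par (midpoint ℝ A B - O) (F - Q))
    (hH : Par (H - A) (D - Q) ∧ Par (H - B) (E - Q) ∧ Par (H - C) (F - Q))
    (CO : Set Pt)
    (hCO : IsConic CO) (hACO : A ∈ CO) (hBCO : B ∈ CO) (hCCO : C ∈ CO)
    (hOcen : IsCenterOf O CO)
    (hCOuniq : ∀ S : Set Pt, IsConic S → A ∈ S → B ∈ S → C ∈ S → IsCenterOf O S → S = CO)
    (I : Set Pt) (cI : Fin 6 → ℝ)
    (hIdeg : ¬(cI 0 = 0 ∧ cI 1 = 0 ∧ cI 2 = 0))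
    (hIset : I = {p : Pt | qval cI p = 0})
    (hItanD : IsTangentLineAt cI (lineThru B C) D)
    (hItanE : IsTangentLineAt cI (lineThru C A) E)
    (hItanF : IsTangentLineAt cI (lineThru A B) F)
    (hIcen : IsCenterOf Q I) :
    ((∃ (S : Pt) (r : ℝ), r ≠ 0 ∧
        ∀ X : Pt, TP (homoth (cent A B C) (-2) (TP' X)) = homoth S r X) ∨
      (∃ v : Pt, ∀ X : Pt, TP (homoth (cent A B C) (-2) (TP' X)) = X + v)) ∧
    (fun X => TP (homoth (cent A B C) (-2) (TP' X))) '' CO = I ∧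
    TP (homoth (cent A B C) (-2) (TP' O)) = Q := by
  have hdet : cross (B - A) (C - A) ≠ 0 := fun h =>
    affineIndependent_iff_not_collinear_set.1 hABC (collinear_of_cross_eq_zero h)
  have hdetB : cross (C - B) (A - B) ≠ 0 := by
    convert hdet using 1; simp [cross]; ring
  have hdetC : cross (A - C) (B - C) ≠ 0 := by
    convert hdet using 1; simp [cross]; ring
  have hyz : y + z ≠ 0 := fun h => hx1 (by linear_combination hsum - h)
  have hzx : z + x ≠ 0 := fun h => hy1 (by linear_combination hsum - h)
  have hxy : x + y ≠ 0 := fun h => hz1 (by linear_combination hsum - h)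
  have eD : D = (y / (y + z)) • B + (z / (y + z)) • C :=
    cevian_trace hdet hsum hyz hPco hD.1 hD.2
  have eE : E = (z / (z + x)) • C + (x / (z + x)) • A :=
    cevian_trace (P := P) (x := y) hdetB (by linear_combination hsum) hzx
      (by rw [hPco]; abel) hE.1 (by rw [Set.insert_comm]; exact hE.2)
  have eF : F = (x / (x + y)) • A + (y / (x + y)) • B :=
    cevian_trace (P := P) (x := z) hdetC (by linear_combination hsum) hxy
      (by rw [hPco]; abel) hF.1 hF.2
  set s := x * y + y * z + z * x with hs
  have eD₃ : D₃ = (z / (y + z)) • B + (y / (y + z)) • C := by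
    have h : x * z / s + x * y / s = x * (y + z) / s := by ring
    rw [cevian_trace hdet (by field_simp; rw [hs]; ring)
      (by rw [h]; exact div_ne_zero (mul_ne_zero hx0 hyz) hst) hP' hD₃.1 hD₃.2, h]
    congr 2 <;> field_simp
  have eE₃ : E₃ = (x / (z + x)) • C + (z / (z + x)) • A := by
    have h : x * y / s + y * z / s = y * (z + x) / s := by ring
    rw [cevian_trace (P := P') (x := x * z / s) (y := x * y / s) (z := y * z / s) hdetB
      (by field_simp; rw [hs]; ring)
      (by rw [h]; exact div_ne_zero (mul_ne_zero hy0 hzx) hst)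
      (by rw [hP']; abel) hE₃.1 (by rw [Set.insert_comm]; exact hE₃.2), h]
    congr 2 <;> field_simp
  have eF₃ : F₃ = (y / (x + y)) • A + (x / (x + y)) • B := by
    have h : y * z / s + x * z / s = z * (x + y) / s := by ring
    rw [cevian_trace (P := P') (x := x * y / s) (y := y * z / s) (z := x * z / s) hdetC
      (by field_simp; rw [hs]; ring)
      (by rw [h]; exact div_ne_zero (mul_ne_zero hz0 hxy) hst)
      (by rw [hP']; abel) hF₃.1 hF₃.2, h]
    congr 2 <;> field_simp
  have eQ : Q = (x * (y + z) / (2 * s)) • A + (y * (z + x) / (2 * s)) • B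
      + (z * (x + y) / (2 * s)) • C := by
    rw [hQ, hP', homoth, cent]
    match_scalars <;> field_simp <;> rw [hs] <;> ring
  set m := (y + z) * (z + x) * (x + y) with hm
  have hm0 : m ≠ 0 := mul_ne_zero (mul_ne_zero hyz hzx) hxy
  set M : Pt → Pt := fun X => TP (homoth (cent A B C) (-2) (TP' X)) with hM
  set r := -(4 * x * y * z) / m with hr
  have hr0 : r ≠ 0 := by
    rw [hr]; simp [hx0, hy0, hz0, hm0]
  set V : Pt := (x * (y + z) ^ 2 / m) • A + (y * (z + x) ^ 2 / m) • B
      + (z * (x + y) ^ 2 / m) • C with hV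
  have hMX : ∀ X, M X = r • X + V := by
    intro X
    obtain ⟨v, w, rfl⟩ := exists_barycentric hdet X
    have e : homoth (cent A B C) (-2)
        (TP' ((1 - v - w) • A + v • B + w • C)) =
        (1 - (1 - 2 * ((1 - v - w) * (z / (y + z)) + w * (x / (x + y))))
          - (1 - 2 * ((1 - v - w) * (y / (y + z)) + v * (x / (z + x))))) • A
        + (1 - 2 * ((1 - v - w) * (z / (y + z)) + w * (x / (x + y)))) • B
        + (1 - 2 * ((1 - v - w) * (y / (y + z)) + v * (x / (z + x)))) • C := by
      rw [map_barycentric, hTP'.1, hTP'.2.1, hTP'.2.2, eD₃, eE₃, eF₃, homoth, cent]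
      match_scalars <;> field_simp <;> ring
    simp only [hM]
    rw [e, map_barycentric, hTP.1, hTP.2.1, hTP.2.2, eD, eE, eF, hV, hr, hm]
    match_scalars <;> field_simp <;> ring
  have hMO : M O = Q := by
    have hDE : cross (D - Q) (E - Q) ≠ 0 := by
      have : cross (D - Q) (E - Q) = x * y * z ^ 2 / (s * (y + z) * (z + x))
          * cross (B - A) (C - A) := by
        rw [eD, eE, eQ]
        simp [cross]
        field_simp
        rw [hs]
        ring
      rw [this]
      exact mul_ne_zero (div_ne_zero
        (mul_ne_zero (mul_ne_zero hx0 hy0) (pow_ne_zero 2 hz0))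
        (mul_ne_zero (mul_ne_zero hst hyz) hzx)) hdet
    refine eq_of_cross_sub_eq_zero hDE ?_ ?_
    · have h := cross_eq_zero_of_par hO.1
      have hpar : M (midpoint ℝ B C) - Q = ((x ^ 2 - s) / ((x + y) * (z + x))) • (D - Q) := by
        rw [hMX, hV, hr, hm, midpoint_eq_smul_add, eD, eQ]
        simp only [invOf_eq_inv]
        match_scalars <;> field_simp <;> rw [hs] <;> ring
      have e : M O - Q = ((x ^ 2 - s) / ((x + y) * (z + x))) • (D - Q)
          - r • (midpoint ℝ B C - O) := by
        rw [← hpar, hMX, hMX]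
        module
      rw [e]
      simp only [cross, Prod.fst_sub, Prod.snd_sub, Prod.smul_fst, Prod.smul_snd,
        smul_eq_mul] at h ⊢
      linear_combination (-r) * h
    · have h := cross_eq_zero_of_par hO.2.1
      have hpar : M (midpoint ℝ C A) - Q = ((y ^ 2 - s) / ((x + y) * (y + z))) • (E - Q) := by
        rw [hMX, hV, hr, hm, midpoint_eq_smul_add, eE, eQ]
        simp only [invOf_eq_inv]
        match_scalars <;> field_simp <;> rw [hs] <;> ring
      have e : M O - Q = ((y ^ 2 - s) / ((x + y) * (y + z))) • (E - Q)
          - r • (midpoint ℝ C A - O) := by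
        rw [← hpar, hMX, hMX]
        module
      rw [e]
      simp only [cross, Prod.fst_sub, Prod.snd_sub, Prod.smul_fst, Prod.smul_snd,
        smul_eq_mul] at h ⊢
      linear_combination (-r) * h
  have vanish := fun {p q t k : ℝ} => qval_inconic_eq_zero (p := p) (q := q) (r := t) (k := k)
    hy0 hz0 hyz hzx hxy eD eE eF hItanD hItanE hItanF
  have hMA : M A ∈ I := by
    rw [hIset, Set.mem_ofPred_eq]
    convert vanish (p := y - z) (q := z + x) (t := -(x + y)) (k := m⁻¹) (by ring)
      (by rw [hm]; field_simp; ring) using 2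
    rw [hMX, hV, hr, hm]
    match_scalars <;> field_simp <;> ring
  have hMB : M B ∈ I := by
    rw [hIset, Set.mem_ofPred_eq]
    convert vanish (p := -(y + z)) (q := z - x) (t := x + y) (k := m⁻¹) (by ring)
      (by rw [hm]; field_simp; ring) using 2
    rw [hMX, hV, hr, hm]
    match_scalars <;> field_simp <;> ring
  have hMC : M C ∈ I := by
    rw [hIset, Set.mem_ofPred_eq]
    convert vanish (p := y + z) (q := -(z + x)) (t := x - y) (k := m⁻¹) (by ring)
      (by rw [hm]; field_simp; ring) using 2
    rw [hMX, hV, hr, hm]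
    match_scalars <;> field_simp <;> ring
  have hMfun : M = fun X => r • X + V := funext hMX
  have hpre : M ⁻¹' I = CO := by
    refine hCOuniq _ ?_ hMA hMB hMC ?_
    · rw [hMfun]
      exact isConic_preimage_scale ⟨cI, hIdeg, hIset⟩ hr0 V
    · intro p hp
      have h : M ((2 : ℝ) • O - p) = (2 : ℝ) • Q - M p := by
        rw [← hMO, hMX, hMX, hMX]
        module
      rw [Set.mem_preimage, h]
      exact hIcen _ hp
  have hsurj : Function.Surjective M := fun Y => ⟨r⁻¹ • (Y - V), by
    rw [hMX, smul_inv_smul₀ hr0, sub_add_cancel]⟩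
  refine ⟨?_, ?_, hMO⟩
  · by_cases hr1 : r = 1
    · exact Or.inr ⟨V, fun X => (hMX X).trans (by rw [hr1, one_smul])⟩
    · refine Or.inl ⟨(1 - r)⁻¹ • V, r, hr0, fun X => (hMX X).trans ?_⟩
      have h1 : 1 - r ≠ 0 := sub_ne_zero.2 (Ne.symm hr1)
      rw [homoth]
      match_scalars <;> field_simp <;> ring
  · rw [← hpre]
    exact Set.image_preimage_eq I hsurj
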